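/- arXiv:quant-ph/0510020 — 2 statements merged into one kernel-verified Lean document; each statement's English description precedes it below -/
import Mathlib

section
/- The following are equivalent: (i) for all s₀, s' ∈ ℝ³ with ‖s₀‖ = ‖s'‖ = 1 there exist t ≥ 0 and p ∈ ℝ³ with ‖p‖ ≤ 1 such that A(t,s₀)·p + a(t,s₀) = s'; (ii) the odd-ratio condition holds, i.e. c_x, c_y, c_z are all nonzero and there exist integers k₁, k₂, k₃ such that c_x·(2k₂+1) = c_y·(2k₁+1) and c_x·(2k₃+1) = c_z·(2k₁+1). -/
open Matrix Real

noncomputable section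

/-- The matrix `A(t, s₀)` of the affine Bloch-vector dynamics. -/
def Amat (cx cy cz t : ℝ) (s : Fin 3 → ℝ) : Matrix (Fin 3) (Fin 3) ℝ :=
  !![Real.sin (2*cy*t) * Real.sin (2*cz*t), -(s 2) * Real.sin (2*cy*t) * Real.cos (2*cz*t),
       s 1 * Real.cos (2*cy*t) * Real.sin (2*cz*t);
     s 2 * Real.sin (2*cx*t) * Real.cos (2*cz*t), Real.sin (2*cx*t) * Real.sin (2*cz*t),
       -(s 0) * Real.cos (2*cx*t) * Real.sin (2*cz*t);
     -(s 1) * Real.cos (2*cy*t) * Real.sin (2*cx*t), s 0 * Real.cos (2*cx*t) * Real.sin (2*cy*t),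
       Real.sin (2*cx*t) * Real.sin (2*cy*t)]

/-- The inhomogeneous part `a(t, s₀)` of the affine Bloch-vector dynamics. -/
def avec (cx cy cz t : ℝ) (s : Fin 3 → ℝ) : Fin 3 → ℝ :=
  ![s 0 * Real.cos (2*cy*t) * Real.cos (2*cz*t),
    s 1 * Real.cos (2*cx*t) * Real.cos (2*cz*t),
    s 2 * Real.cos (2*cx*t) * Real.cos (2*cy*t)]

/-- The odd-ratio condition on the interaction constants. -/
def OddRatio (cx cy cz : ℝ) : Prop :=
  cx ≠ 0 ∧ cy ≠ 0 ∧ cz ≠ 0 ∧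
    ∃ k₁ k₂ k₃ : ℤ, cx * (2 * (k₂ : ℝ) + 1) = cy * (2 * (k₁ : ℝ) + 1) ∧
      cx * (2 * (k₃ : ℝ) + 1) = cz * (2 * (k₁ : ℝ) + 1)

/-! Write `α = 2 c_x t`, `β = 2 c_y t`. From the pole `e_z`, a rotation of the control in the
`xy`-plane turns the dynamics into `(u, v, w) ↦ (sin β u, sin α v, sin α sin β w + cos α cos β)`. By
Lagrange's identity the defect `1 - ‖s'‖²` of the image `s'` is
`sin² α (1 - ‖(u, v, w)‖²) + (cos² β - cos² α) u² + (cos α sin β - sin α cos β w)²`.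
If `cos² α ≤ cos² β`, every term is nonnegative, so a pure image with nonzero `x`- and
`y`-coordinates forces `cos α = cos β = 0`; otherwise exchange `α` and `β`. By cyclic symmetry the
pole `e_x` yields a common zero of `cos (2 c_y t)` and `cos (2 c_z t)`, and such common zeros exist
exactly for odd ratios.
Conversely, at a common zero of all three cosines `A` is diagonal with entries `±1` and `a = 0`, so
the control `A s'` produces the target `s'`.
-/

/-- The state `s'` can be reached from `s` at some nonnegative time, the control being the Bloch
vector `p`, pure or mixed, of the auxiliary system. -/
def Steerable (cx cy cz : ℝ) (s s' : EuclideanSpace ℝ (Fin 3)) : Prop :=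
  ∃ t ≥ (0 : ℝ), ∃ p : EuclideanSpace ℝ (Fin 3), ‖p‖ ≤ 1 ∧
    Amat cx cy cz t s *ᵥ p + avec cx cy cz t s = s'

section CosineZeros

variable {cx cy cz t : ℝ}

theorem ne_zero_of_cos_two_mul_eq_zero {c : ℝ} (h : cos (2 * c * t) = 0) : c ≠ 0 := by
  rintro rfl
  simp at h

theorem exists_odd_mul_eq_of_cos_eq_zero {a b : ℝ} (ha : cos (2 * a * t) = 0)
    (hb : cos (2 * b * t) = 0) : ∃ m n : ℤ, a * (2 * (m : ℝ) + 1) = b * (2 * (n : ℝ) + 1) := by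
  have ht : t ≠ 0 := by
    rintro rfl
    simp at ha
  obtain ⟨n, hn⟩ := cos_eq_zero_iff.mp ha
  obtain ⟨m, hm⟩ := cos_eq_zero_iff.mp hb
  refine ⟨m, n, mul_right_cancel₀ ht ?_⟩
  linear_combination (2 * (m : ℝ) + 1) / 2 * hn - (2 * (n : ℝ) + 1) / 2 * hm

theorem OddRatio.of_exists_cos_eq_zero (hxy : ∃ t, cos (2 * cx * t) = 0 ∧ cos (2 * cy * t) = 0)
    (hyz : ∃ t, cos (2 * cy * t) = 0 ∧ cos (2 * cz * t) = 0) : OddRatio cx cy cz := by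
  obtain ⟨t, hx, hy⟩ := hxy
  obtain ⟨r, hy₂, hz⟩ := hyz
  obtain ⟨a, b, hab⟩ := exists_odd_mul_eq_of_cos_eq_zero hx hy
  obtain ⟨c, d, hcd⟩ := exists_odd_mul_eq_of_cos_eq_zero hy₂ hz
  -- `2 * (2 * m * n + m + n) + 1 = (2 * m + 1) * (2 * n + 1)`
  refine ⟨ne_zero_of_cos_two_mul_eq_zero hx, ne_zero_of_cos_two_mul_eq_zero hy,
    ne_zero_of_cos_two_mul_eq_zero hz,
    2 * b * d + b + d, 2 * a * d + a + d, 2 * a * c + a + c, ?_, ?_⟩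
  · push_cast
    linear_combination (2 * (d : ℝ) + 1) * hab
  · push_cast
    linear_combination (2 * (c : ℝ) + 1) * hab + (2 * (b : ℝ) + 1) * hcd

theorem cos_mul_abs (a t : ℝ) : cos (a * |t|) = cos (a * t) := by
  rw [← cos_abs, abs_mul, abs_abs, ← abs_mul, cos_abs]

theorem OddRatio.exists_cos_eq_zero (h : OddRatio cx cy cz) :
    ∃ t ≥ (0 : ℝ), cos (2 * cx * t) = 0 ∧ cos (2 * cy * t) = 0 ∧ cos (2 * cz * t) = 0 := by
  obtain ⟨hcx, -, -, k₁, k₂, k₃, hy, hz⟩ := h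
  have cos_eq_zero_of_ratio : ∀ (c : ℝ) (k : ℤ),
      cx * (2 * (k : ℝ) + 1) = c * (2 * (k₁ : ℝ) + 1) →
        cos (2 * c * |(2 * (k₁ : ℝ) + 1) * π / (4 * cx)|) = 0 := by
    intro c k hk
    rw [cos_mul_abs, cos_eq_zero_iff]
    refine ⟨k, ?_⟩
    field_simp
    linear_combination -4 * hk
  exact ⟨_, abs_nonneg _, cos_eq_zero_of_ratio cx k₁ rfl, cos_eq_zero_of_ratio cy k₂ hy,
    cos_eq_zero_of_ratio cz k₃ hz⟩

end CosineZeros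

section Sufficiency

variable {cx cy cz t : ℝ} {s s' : EuclideanSpace ℝ (Fin 3)}

theorem Amat_of_cos_eq_zero (hx : cos (2 * cx * t) = 0) (hy : cos (2 * cy * t) = 0)
    (hz : cos (2 * cz * t) = 0) (s : Fin 3 → ℝ) :
    Amat cx cy cz t s = diagonal ![sin (2 * cy * t) * sin (2 * cz * t),
      sin (2 * cx * t) * sin (2 * cz * t), sin (2 * cx * t) * sin (2 * cy * t)] := by
  ext i j
  fin_cases i <;> fin_cases j <;> simp [Amat, hx, hy, hz]

theorem avec_of_cos_eq_zero (hx : cos (2 * cx * t) = 0) (hy : cos (2 * cy * t) = 0)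
    (s : Fin 3 → ℝ) : avec cx cy cz t s = 0 := by
  ext i
  fin_cases i <;> simp [avec, hx, hy]

theorem norm_toLp_mul_of_sq_eq_one {ι : Type*} [Fintype ι] {d : ι → ℝ} (hd : d ^ 2 = 1)
    (x : ι → ℝ) : ‖WithLp.toLp 2 (d * x)‖ = ‖WithLp.toLp 2 x‖ := by
  have hd_apply (i : ι) : d i ^ 2 = 1 := congrFun hd i
  simp only [EuclideanSpace.norm_eq, Pi.mul_apply, norm_mul, mul_pow, norm_eq_abs, sq_abs,
    hd_apply, one_mul]

theorem sin_mul_sin_sq_eq_one {α β : ℝ} (hα : cos α = 0) (hβ : cos β = 0) :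
    (sin α * sin β) ^ 2 = 1 := by
  simp [mul_pow, sin_sq, hα, hβ]

theorem Steerable.of_cos_eq_zero (ht : 0 ≤ t) (hx : cos (2 * cx * t) = 0)
    (hy : cos (2 * cy * t) = 0) (hz : cos (2 * cz * t) = 0) (hs' : ‖s'‖ ≤ 1) :
    Steerable cx cy cz s s' := by
  set d : Fin 3 → ℝ := ![sin (2 * cy * t) * sin (2 * cz * t),
    sin (2 * cx * t) * sin (2 * cz * t), sin (2 * cx * t) * sin (2 * cy * t)]
  have hd_sq : d ^ 2 = 1 := by
    ext i
    fin_cases i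
    exacts [sin_mul_sin_sq_eq_one hy hz, sin_mul_sin_sq_eq_one hx hz, sin_mul_sin_sq_eq_one hx hy]
  refine ⟨t, ht, WithLp.toLp 2 (d * s'), (norm_toLp_mul_of_sq_eq_one hd_sq s').trans_le hs', ?_⟩
  calc Amat cx cy cz t s *ᵥ (d * s') + avec cx cy cz t s
      = diagonal d *ᵥ (d * s') := by
        rw [Amat_of_cos_eq_zero hx hy hz, avec_of_cos_eq_zero hx hy, add_zero]
    _ = d ^ 2 * s' := by
        ext i
        simp only [mulVec_diagonal, Pi.mul_apply, sq, mul_assoc]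
    _ = s' := by rw [hd_sq, one_mul]

end Sufficiency

section Necessity

variable {cx cy cz : ℝ} {s s' : EuclideanSpace ℝ (Fin 3)}

theorem one_sub_normSq_eq (α β u v w : ℝ) :
    1 - ((sin β * u) ^ 2 + (sin α * v) ^ 2 + (sin α * sin β * w + cos α * cos β) ^ 2) =
      sin α ^ 2 * (1 - (u ^ 2 + v ^ 2 + w ^ 2)) + (cos β ^ 2 - cos α ^ 2) * u ^ 2 +
        (cos α * sin β - sin α * cos β * w) ^ 2 := by
  linear_combination (u ^ 2 - 1) * sin_sq_add_cos_sq α -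
    (sin α ^ 2 * w ^ 2 + cos α ^ 2 + u ^ 2) * sin_sq_add_cos_sq β

theorem cos_eq_zero_of_normSq_eq_one_of_le {α β u v w : ℝ} (huvw : u ^ 2 + v ^ 2 + w ^ 2 ≤ 1)
    (hpure : (sin β * u) ^ 2 + (sin α * v) ^ 2 + (sin α * sin β * w + cos α * cos β) ^ 2 = 1)
    (hu : sin β * u ≠ 0) (hle : cos α ^ 2 ≤ cos β ^ 2) : cos α = 0 ∧ cos β = 0 := by
  obtain ⟨hβ, hu⟩ := mul_ne_zero_iff.mp hu
  have hu_sq : 0 < u ^ 2 := by positivity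
  have hdefect := one_sub_normSq_eq α β u v w
  rw [hpure, sub_self] at hdefect
  have hmixed : 0 ≤ sin α ^ 2 * (1 - (u ^ 2 + v ^ 2 + w ^ 2)) :=
    mul_nonneg (sq_nonneg _) (sub_nonneg.mpr huvw)
  have hgap : 0 ≤ (cos β ^ 2 - cos α ^ 2) * u ^ 2 :=
    mul_nonneg (sub_nonneg.mpr hle) (sq_nonneg _)
  have hlagrange := sq_nonneg (cos α * sin β - sin α * cos β * w)
  have hcos : cos β ^ 2 = cos α ^ 2 := by
    have : (cos β ^ 2 - cos α ^ 2) * u ^ 2 = 0 := by linarith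
    exact sub_eq_zero.mp ((mul_eq_zero_iff_right hu_sq.ne').mp this)
  have hsin : sin α ^ 2 = sin β ^ 2 := by rw [sin_sq, sin_sq, hcos]
  have hprop : cos α * sin β = sin α * cos β * w :=
    sub_eq_zero.mp (sq_eq_zero_iff.mp (by linarith))
  have hw : 0 < 1 - w ^ 2 := by linarith only [huvw, hu_sq, sq_nonneg v]
  have hcos_mul : cos α ^ 2 * (sin β ^ 2 * (1 - w ^ 2)) = 0 := by
    calc cos α ^ 2 * (sin β ^ 2 * (1 - w ^ 2))
        = (cos α * sin β) ^ 2 - cos α ^ 2 * sin β ^ 2 * w ^ 2 := by ring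
      _ = (sin α * cos β * w) ^ 2 - cos β ^ 2 * sin α ^ 2 * w ^ 2 := by rw [hprop, hcos, hsin]
      _ = 0 := by ring
  have hcos_sq : cos α ^ 2 = 0 :=
    (mul_eq_zero_iff_right (mul_ne_zero (pow_ne_zero 2 hβ) hw.ne')).mp hcos_mul
  exact ⟨sq_eq_zero_iff.mp hcos_sq, sq_eq_zero_iff.mp (hcos.trans hcos_sq)⟩

theorem cos_eq_zero_of_normSq_eq_one {α β u v w : ℝ} (huvw : u ^ 2 + v ^ 2 + w ^ 2 ≤ 1)
    (hpure : (sin β * u) ^ 2 + (sin α * v) ^ 2 + (sin α * sin β * w + cos α * cos β) ^ 2 = 1)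
    (hu : sin β * u ≠ 0) (hv : sin α * v ≠ 0) : cos α = 0 ∧ cos β = 0 := by
  rcases le_total (cos α ^ 2) (cos β ^ 2) with hle | hle
  · exact cos_eq_zero_of_normSq_eq_one_of_le huvw hpure hu hle
  · exact (cos_eq_zero_of_normSq_eq_one_of_le (u := v) (v := u) (w := w) (by linarith only [huvw])
      (by linear_combination hpure) hv hle).symm

theorem mulVec_add_avec_single_two (cx cy cz t : ℝ) (p : Fin 3 → ℝ) :
    Amat cx cy cz t (Pi.single 2 1) *ᵥ p + avec cx cy cz t (Pi.single 2 1) =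
      ![sin (2 * cy * t) * (sin (2 * cz * t) * p 0 - cos (2 * cz * t) * p 1),
        sin (2 * cx * t) * (cos (2 * cz * t) * p 0 + sin (2 * cz * t) * p 1),
        sin (2 * cx * t) * sin (2 * cy * t) * p 2 + cos (2 * cx * t) * cos (2 * cy * t)] := by
  ext i
  fin_cases i <;> 
    simp [Amat, avec, dotProduct, Fin.sum_univ_three, mul_add, mul_assoc, sub_eq_add_neg]

theorem Steerable.exists_cos_eq_zero (h : Steerable cx cy cz (EuclideanSpace.single 2 1) s')
    (hs' : ‖s'‖ = 1) (h₀ : s' 0 ≠ 0) (h₁ : s' 1 ≠ 0) :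
    ∃ t, cos (2 * cx * t) = 0 ∧ cos (2 * cy * t) = 0 := by
  obtain ⟨t, -, p, hp, hsteer⟩ := h
  have hs'_eq := (mulVec_add_avec_single_two cx cy cz t p).symm.trans hsteer
  have hp_sq : p 0 ^ 2 + p 1 ^ 2 + p 2 ^ 2 ≤ 1 := by
    rw [← Fin.sum_univ_three (p · ^ 2), ← EuclideanSpace.real_norm_sq_eq]
    exact pow_le_one₀ (norm_nonneg p) hp
  have hs'_sq : s' 0 ^ 2 + s' 1 ^ 2 + s' 2 ^ 2 = 1 := by
    rw [← Fin.sum_univ_three (s' · ^ 2), ← EuclideanSpace.real_norm_sq_eq, hs', one_pow]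
  rw [← hs'_eq] at h₀ h₁ hs'_sq
  refine ⟨t, cos_eq_zero_of_normSq_eq_one ?_ hs'_sq h₀ h₁⟩
  linear_combination hp_sq + (p 0 ^ 2 + p 1 ^ 2) * sin_sq_add_cos_sq (2 * cz * t)

/-- The isometry `(x, y, z) ↦ (y, z, x)`, which reduces the pole `e_x` to the pole `e_z`. -/
def cyclicShift : EuclideanSpace ℝ (Fin 3) ≃ₗᵢ[ℝ] EuclideanSpace ℝ (Fin 3) :=
  LinearIsometryEquiv.piLpCongrLeft 2 ℝ ℝ (finRotate 3).symm

theorem ofLp_cyclicShift (s : EuclideanSpace ℝ (Fin 3)) :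
    (cyclicShift s).ofLp = s.ofLp ∘ finRotate 3 := rfl

theorem cyclicShift_single_zero :
    cyclicShift (EuclideanSpace.single 0 1) = EuclideanSpace.single 2 1 :=
  LinearIsometryEquiv.piLpCongrLeft_single _ _ _

theorem Amat_comp_finRotate (cx cy cz t : ℝ) (s : Fin 3 → ℝ) :
    Amat cy cz cx t (s ∘ finRotate 3) =
      (Amat cx cy cz t s).submatrix (finRotate 3) (finRotate 3) := by
  ext i j
  fin_cases i <;> fin_cases j <;> simp [Amat, mul_assoc, mul_comm, mul_left_comm]

theorem avec_comp_finRotate (cx cy cz t : ℝ) (s : Fin 3 → ℝ) :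
    avec cy cz cx t (s ∘ finRotate 3) = avec cx cy cz t s ∘ finRotate 3 := by
  ext i
  fin_cases i <;> simp [avec, mul_right_comm]

theorem Steerable.map_cyclicShift (h : Steerable cx cy cz s s') :
    Steerable cy cz cx (cyclicShift s) (cyclicShift s') := by
  obtain ⟨t, ht, p, hp, hsteer⟩ := h
  refine ⟨t, ht, cyclicShift p, (LinearIsometryEquiv.norm_map _ p).trans_le hp, ?_⟩
  simp only [ofLp_cyclicShift]
  rw [Amat_comp_finRotate, avec_comp_finRotate, submatrix_mulVec_equiv, Function.comp_assoc,
    Equiv.self_comp_symm, Function.comp_id, ← hsteer]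
  rfl

theorem OddRatio.of_steerable_poles (hs' : ‖s'‖ = 1) (hne : ∀ i, s' i ≠ 0)
    (hx : Steerable cx cy cz (EuclideanSpace.single 0 1) s')
    (hz : Steerable cx cy cz (EuclideanSpace.single 2 1) s') : OddRatio cx cy cz := by
  have hx_shift := hx.map_cyclicShift
  rw [cyclicShift_single_zero] at hx_shift
  exact .of_exists_cos_eq_zero (hz.exists_cos_eq_zero hs' (hne 0) (hne 1))
    (hx_shift.exists_cos_eq_zero ((LinearIsometryEquiv.norm_map _ s').trans hs') (hne 1) (hne 2))

end Necessity

theorem exists_norm_eq_one_and_forall_ne_zero (ι : Type*) [Fintype ι] [Nonempty ι] :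
    ∃ x : EuclideanSpace ℝ ι, ‖x‖ = 1 ∧ ∀ i, x i ≠ 0 := by
  set e : EuclideanSpace ℝ ι := WithLp.toLp 2 1 with he
  have he_ne : e ≠ 0 := by simp [he]
  exact ⟨‖e‖⁻¹ • e, norm_smul_inv_norm he_ne, fun i ↦ by simp [he]⟩

theorem pureState_controllable_iff_oddRatio_general (cx cy cz : ℝ)
    {S T : Set (EuclideanSpace ℝ (Fin 3))} (hx : EuclideanSpace.single 0 1 ∈ S)
    (hz : EuclideanSpace.single 2 1 ∈ S) (hT : ∀ s' ∈ T, ‖s'‖ ≤ 1)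
    (hpure : ∃ s' ∈ T, ‖s'‖ = 1 ∧ ∀ i, s' i ≠ 0) :
    (∀ s ∈ S, ∀ s' ∈ T, Steerable cx cy cz s s') ↔ OddRatio cx cy cz := by
  constructor
  · intro h
    obtain ⟨s', hs'T, hs', hne⟩ := hpure
    exact .of_steerable_poles hs' hne (h _ hx _ hs'T) (h _ hz _ hs'T)
  · intro h s _ s' hs'
    obtain ⟨t, ht, hcx, hcy, hcz⟩ := h.exists_cos_eq_zero
    exact .of_cos_eq_zero ht hcx hcy hcz (hT s' hs')

/-- Theorem 1, pure-state controllability: every pure state (unit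
Bloch vector) can be steered to every other pure state iff the odd-ratio
condition holds. -/
theorem pureState_controllable_iff_oddRatio (cx cy cz : ℝ) :
    (∀ s₀ s' : EuclideanSpace ℝ (Fin 3), ‖s₀‖ = 1 → ‖s'‖ = 1 →
      ∃ t ≥ (0:ℝ), ∃ p : EuclideanSpace ℝ (Fin 3), ‖p‖ ≤ 1 ∧
        (Amat cx cy cz t s₀).mulVec p + avec cx cy cz t s₀ = s') ↔
    OddRatio cx cy cz := by
  rw [← pureState_controllable_iff_oddRatio_general cx cy cz
    (S := {s | ‖s‖ = 1}) (T := {s' | ‖s'‖ = 1}) (by simp) (by simp) (fun _ hs' ↦ le_of_eq hs')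
    ((exists_norm_eq_one_and_forall_ne_zero (Fin 3)).imp fun _ h ↦ ⟨h.1, h⟩)]
  exact forall_congr' fun _ ↦ forall_comm
end
end

section
/- For all t ∈ ℝ and s₀ = (s_x,s_y,s_z) ∈ ℝ³, det A(t,s₀) = s_x²·sin²(2c_y t)·sin²(2c_z t) + s_y²·sin²(2c_x t)·sin²(2c_z t) + s_z²·sin²(2c_x t)·sin²(2c_y t) + (1 − s_x² − s_y² − s_z²)·sin²(2c_x t)·sin²(2c_y t)·sin²(2c_z t). -/
open Matrix Real

noncomputable section

/-!
Let `D` be the diagonal matrix of the sines and let `v i` be `s i` times the `i`-th cosine. Then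
`A(t, s₀) = adj D + [v]ₓ D`, where `[v]ₓ` is the matrix of `v ⨯₃ ·`. In the expansion of this
determinant in powers of `v` the odd terms vanish because `[v]ₓ` is alternating and `D` symmetric,
and since `adj [v]ₓ = v vᵀ` what remains is `(det D)² + |adj(D) v|²`. The claim follows by
substituting `cos² = 1 - sin²`.
-/

section CrossMatrix

variable {R : Type*} [CommRing R]

/-- The matrix `[v]ₓ` of the linear map `w ↦ v ⨯₃ w` in the standard basis. -/
def crossMatrix (v : Fin 3 → R) : Matrix (Fin 3) (Fin 3) R :=
  LinearMap.toMatrix' (crossProduct v)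

theorem crossMatrix_eq_of (v : Fin 3 → R) :
    crossMatrix v = !![0, -v 2, v 1; v 2, 0, -v 0; -v 1, v 0, 0] := by
  ext i j
  fin_cases i <;> fin_cases j <;> simp [crossMatrix, LinearMap.toMatrix'_apply, cross_apply]

theorem det_crossMatrix (v : Fin 3 → R) : (crossMatrix v).det = 0 := by
  rw [crossMatrix_eq_of, det_fin_three]
  simp only [of_apply, cons_val]
  ring

theorem adjugate_crossMatrix (v : Fin 3 → R) : (crossMatrix v).adjugate = vecMulVec v v := by
  rw [crossMatrix_eq_of, adjugate_fin_three_of]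
  ext i j
  fin_cases i <;> fin_cases j <;> simp [vecMulVec_apply, mul_comm (v 0)]

theorem trace_mul_crossMatrix_of_isSymm {S : Matrix (Fin 3) (Fin 3) R} (hS : S.IsSymm)
    (v : Fin 3 → R) : (S * crossMatrix v).trace = 0 := by
  rw [crossMatrix_eq_of, trace_fin_three]
  simp only [mul_apply, Fin.sum_univ_three, of_apply, cons_val]
  linear_combination v 2 * hS.apply 1 0 + v 1 * hS.apply 0 2 + v 0 * hS.apply 2 1

theorem det_add_fin_three (A B : Matrix (Fin 3) (Fin 3) R) :
    (A + B).det =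
      A.det + (A.adjugate * B).trace + (A * B.adjugate).trace + B.det := by
  simp only [det_fin_three, adjugate_fin_three, trace_fin_three, mul_apply, Fin.sum_univ_three,
    Matrix.add_apply, of_apply, cons_val]
  ring

theorem det_adjugate_add_crossMatrix_mul {D : Matrix (Fin 3) (Fin 3) R} (hD : D.IsSymm)
    (v : Fin 3 → R) :
    (D.adjugate + crossMatrix v * D).det =
      D.det ^ 2 + (D.adjugate *ᵥ v) ⬝ᵥ (D.adjugate *ᵥ v) := by
  have linear_term : (D.adjugate.adjugate * (crossMatrix v * D)).trace = 0 := by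
    have hDD : (D * D).IsSymm := by rw [IsSymm, transpose_mul, hD]
    rw [adjugate_adjugate D (by simp), smul_mul, trace_smul, ← Matrix.mul_assoc, trace_mul_comm,
      ← Matrix.mul_assoc, trace_mul_crossMatrix_of_isSymm hDD, smul_zero]
  have quadratic_term : (D.adjugate * (crossMatrix v * D).adjugate).trace =
      (D.adjugate *ᵥ v) ⬝ᵥ (D.adjugate *ᵥ v) := by
    have hadj : D.adjugateᵀ = D.adjugate := by rw [adjugate_transpose, hD]
    rw [adjugate_mul_distrib, adjugate_crossMatrix, mul_vecMulVec, mul_vecMulVec, trace_vecMulVec,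
      dotProduct_comm, dotProduct_mulVec, ← mulVec_transpose, hadj]
  rw [det_add_fin_three, linear_term, quadratic_term, det_adjugate, det_mul, det_crossMatrix]
  simp

theorem adjugate_diagonal_fin_three (d : Fin 3 → R) :
    (diagonal d).adjugate = diagonal ![d 1 * d 2, d 0 * d 2, d 0 * d 1] := by
  rw [adjugate_fin_three]
  ext i j
  fin_cases i <;> fin_cases j <;> simp

end CrossMatrix

theorem Amat_eq_adjugate_add_crossMatrix_mul (cx cy cz t : ℝ) (s : Fin 3 → ℝ) :
    Amat cx cy cz t s =
      (diagonal ![sin (2*cx*t), sin (2*cy*t), sin (2*cz*t)]).adjugate +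
        crossMatrix ![s 0 * cos (2*cx*t), s 1 * cos (2*cy*t), s 2 * cos (2*cz*t)] *
          diagonal ![sin (2*cx*t), sin (2*cy*t), sin (2*cz*t)] := by
  rw [adjugate_diagonal_fin_three, crossMatrix_eq_of]
  ext i j
  rw [Matrix.add_apply, mul_diagonal]
  fin_cases i <;> fin_cases j <;> simp [Amat, mul_right_comm]

/-- explicit formula for `det A(t, s₀)`. -/
theorem det_Amat (cx cy cz t : ℝ) (s : Fin 3 → ℝ) :
    (Amat cx cy cz t s).det =
      (s 0)^2 * Real.sin (2*cy*t)^2 * Real.sin (2*cz*t)^2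
      + (s 1)^2 * Real.sin (2*cx*t)^2 * Real.sin (2*cz*t)^2
      + (s 2)^2 * Real.sin (2*cx*t)^2 * Real.sin (2*cy*t)^2
      + (1 - (s 0)^2 - (s 1)^2 - (s 2)^2) *
          Real.sin (2*cx*t)^2 * Real.sin (2*cy*t)^2 * Real.sin (2*cz*t)^2 := by
  rw [Amat_eq_adjugate_add_crossMatrix_mul,
    det_adjugate_add_crossMatrix_mul (isSymm_diagonal _), det_diagonal,
    adjugate_diagonal_fin_three, vec3_dotProduct]
  simp only [mulVec_diagonal, Fin.prod_univ_three, cons_val]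
  linear_combination
    (s 0 * sin (2*cy*t) * sin (2*cz*t)) ^ 2 * cos_sq' (2*cx*t)
    + (s 1 * sin (2*cx*t) * sin (2*cz*t)) ^ 2 * cos_sq' (2*cy*t)
    + (s 2 * sin (2*cx*t) * sin (2*cy*t)) ^ 2 * cos_sq' (2*cz*t)
end
end
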